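/- Dandelin–Gallucci implies Pappus. Let rk be a rank function satisfying the full 3D projective rank axiom system: (A1)–(A4); (A5) rk{P,Q} = 2 whenever P ≠ Q; (A6) for all points A, B, C, D with rk{A,B,C,D} ≤ 3 there exists J with rk{A,B,J} = 2 and rk{C,D,J} = 2; (A7) for all points A, B there exists C with rk{A,B,C} = rk{B,C} = rk{A,C} = 2; (A8) there exist points P₁, P₂, P₃, P₄ with rk{P₁,P₂,P₃,P₄} = 4; (A9) rk X ≤ 4 for every finite set X; (A10) for all A, B, C, A', B' with rk{A,B,C} = 3 and rk{A',B'} = 2 there exists M with rk{A,B,C,M} = 3 and rk{A',B',M} = 2. If rk satisfies the Dandelin–Gallucci rank property, then rk satisfies the Pappus rank property. -/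

import Mathlib

/-- Pappus rank property: for two triples of collinear, pairwise distinct
points on two distinct lines, the three intersection points of the cross
lines are collinear. -/
def PappusRank {Pt : Type*} [DecidableEq Pt] (rk : Finset Pt → ℕ) : Prop :=
  ∀ A B C A' B' C' X Y Z : Pt,
    rk {A, B, C} ≤ 2 → rk {A', B', C'} ≤ 2 →
    rk {A, B} = 2 → rk {A, C} = 2 → rk {B, C} = 2 →
    rk {A', B'} = 2 → rk {A', C'} = 2 → rk {B', C'} = 2 →
    rk {A, A'} = 2 → rk {A, B'} = 2 → rk {A, C'} = 2 →
    rk {B, A'} = 2 → rk {B, B'} = 2 → rk {B, C'} = 2 →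
    rk {C, A'} = 2 → rk {C, B'} = 2 → rk {C, C'} = 2 →
    3 ≤ rk {A, B, C, A', B', C'} →
    rk {A, B', X} ≤ 2 → rk {A', B, X} ≤ 2 →
    rk {A, C', Y} ≤ 2 → rk {A', C, Y} ≤ 2 →
    rk {B, C', Z} ≤ 2 → rk {B', C, Z} ≤ 2 →
    rk {X, Y, Z} ≤ 2

/-- A line is represented by an ordered pair of distinct points. -/
def IsLineRk {Pt : Type*} [DecidableEq Pt] (rk : Finset Pt → ℕ) (l : Pt × Pt) : Prop :=
  rk {l.1, l.2} = 2

/-- Two lines meet (are coplanar). -/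
def MeetRk {Pt : Type*} [DecidableEq Pt] (rk : Finset Pt → ℕ) (l m : Pt × Pt) : Prop :=
  rk {l.1, l.2, m.1, m.2} ≤ 3

/-- Two lines are skew. -/
def SkewRk {Pt : Type*} [DecidableEq Pt] (rk : Finset Pt → ℕ) (l m : Pt × Pt) : Prop :=
  rk {l.1, l.2, m.1, m.2} = 4

/-- Dandelin–Gallucci rank property: given lines a, b, c pairwise skew and
e, f, g pairwise skew such that every line among a, b, c meets every line
among e, f, g, any line d meeting e, f, g meets any line h meeting a, b, c. -/
def DGRank {Pt : Type*} [DecidableEq Pt] (rk : Finset Pt → ℕ) : Prop :=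
  ∀ a b c e f g d h : Pt × Pt,
    IsLineRk rk a → IsLineRk rk b → IsLineRk rk c →
    IsLineRk rk e → IsLineRk rk f → IsLineRk rk g →
    IsLineRk rk d → IsLineRk rk h →
    SkewRk rk a b → SkewRk rk a c → SkewRk rk b c →
    SkewRk rk e f → SkewRk rk e g → SkewRk rk f g →
    MeetRk rk a e → MeetRk rk a f → MeetRk rk a g →
    MeetRk rk b e → MeetRk rk b f → MeetRk rk b g →
    MeetRk rk c e → MeetRk rk c f → MeetRk rk c g →
    MeetRk rk d e → MeetRk rk d f → MeetRk rk d g →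
    MeetRk rk h a → MeetRk rk h b → MeetRk rk h c →
    MeetRk rk d h

/-!
Write `a`, `b` for the two triads and `x k` for the intersection of the cross lines `aᵢbⱼ` and
`aⱼbᵢ`, `{i, j, k} = {0, 1, 2}`. If a point of one triad lies on the line of the other, two of the
points `x k` coincide. Otherwise choose `S` off the plane of the triads, a third point `U` on `b₀S`
and the point `W` where `a₁U` meets the plane `a₀b₁S`. The line through `a₂` that meets `b₀S` and
`b₁W`, and the line through `b₂` that meets `a₀S` and `a₁U`, are transversals of the two families
in a Dandelin–Gallucci configuration, so they meet, in a point `N`. Then `SW`, `SN` and `WN` pass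
through `x 2`, `x 1` and `x 0`, so these three points lie on the line where the plane `SWN` cuts
the plane of the triads.
-/

section RankGeometry

open Finset (univ)

variable {Pt : Type*} [DecidableEq Pt] {rk : Finset Pt → ℕ}

/-- A rank function on the finite subsets of `Pt` in the sense of axioms (A1)–(A4): the rank
function of a loopless matroid. Points `p` and `q` with `rk {p, q} = 1` represent the same
geometric point. -/
structure IsRankFunction (rk : Finset Pt → ℕ) : Prop where
  le_card : ∀ s, rk s ≤ s.card
  mono : ∀ s t, s ⊆ t → rk s ≤ rk t
  submodular : ∀ s t, rk (s ∪ t) + rk (s ∩ t) ≤ rk s + rk t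
  singleton : ∀ p, rk {p} = 1

/-- The flat spanned by `s`: the points that do not increase the rank of `s`. -/
def rankSpan (rk : Finset Pt → ℕ) (s : Finset Pt) : Set Pt :=
  {p | rk (insert p s) ≤ rk s}

namespace IsRankFunction

variable {s t u v : Finset Pt} {p q r : Pt} (h : IsRankFunction rk)
include h

theorem rk_insert_le_add_one (p : Pt) (s : Finset Pt) : rk (insert p s) ≤ rk s + 1 := by
  have := h.submodular {p} s
  rw [h.singleton, ← Finset.insert_eq] at this
  omega

theorem rk_insert_of_notMem_rankSpan (hp : p ∉ rankSpan rk s) : rk (insert p s) = rk s + 1 :=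
  le_antisymm (h.rk_insert_le_add_one p s) (Nat.succ_le_of_lt (not_le.1 hp))

theorem rk_pair_of_notMem_rankSpan (hp : p ∉ rankSpan rk {q}) : rk {p, q} = 2 := by
  rw [h.rk_insert_of_notMem_rankSpan hp, h.singleton]

theorem mem_rankSpan_of_rk_le (hp : p ∈ t) (hst : s ⊆ t) (hrk : rk t ≤ rk s) :
    p ∈ rankSpan rk s :=
  (h.mono _ _ (Finset.insert_subset hp hst)).trans hrk

theorem mem_rankSpan_of_mem (hp : p ∈ s) : p ∈ rankSpan rk s :=
  h.mem_rankSpan_of_rk_le hp subset_rfl le_rfl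

theorem rk_union_le_of_subset_rankSpan (ht : ↑t ⊆ rankSpan rk s) : rk (s ∪ t) ≤ rk s := by
  induction t using Finset.induction_on with
  | empty => simp
  | insert p t _ ih =>
    obtain ⟨hp, ht⟩ := Set.insert_subset_iff.1 (Finset.coe_insert p t ▸ ht)
    have hsub := h.submodular (s ∪ t) (insert p s)
    have hunion := h.mono (s ∪ insert p t) (s ∪ t ∪ insert p s) (by grind)
    have hinter := h.mono s ((s ∪ t) ∩ insert p s) (by grind)
    have hp : rk (insert p s) ≤ rk s := hp
    have := ih ht
    omega

theorem rk_le_of_subset_rankSpan (ht : ↑t ⊆ rankSpan rk s) : rk t ≤ rk s :=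
  (h.mono _ _ Finset.subset_union_right).trans (h.rk_union_le_of_subset_rankSpan ht)

theorem rankSpan_subset_rankSpan (ht : ↑t ⊆ rankSpan rk s) : rankSpan rk t ⊆ rankSpan rk s := by
  intro p (hp : rk (insert p t) ≤ rk t)
  have hsub := h.submodular (s ∪ t) (insert p t)
  have hunion := h.mono (insert p s) (s ∪ t ∪ insert p t) (by grind)
  have hinter := h.mono t ((s ∪ t) ∩ insert p t) (by grind)
  have := h.rk_union_le_of_subset_rankSpan ht
  change rk (insert p s) ≤ rk s
  omega

theorem rankSpan_mono (hts : t ⊆ s) : rankSpan rk t ⊆ rankSpan rk s :=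
  h.rankSpan_subset_rankSpan fun _ hp => h.mem_rankSpan_of_mem (hts hp)

theorem mem_rankSpan_insert_exchange (hp : p ∈ rankSpan rk (insert q s))
    (hps : p ∉ rankSpan rk s) : q ∈ rankSpan rk (insert p s) := by
  have hp : rk (insert p (insert q s)) ≤ rk (insert q s) := hp
  have hps : rk (insert p s) = rk s + 1 := h.rk_insert_of_notMem_rankSpan hps
  have := h.rk_insert_le_add_one q s
  change rk (insert q (insert p s)) ≤ rk (insert p s)
  rw [Finset.insert_comm]
  omega

theorem rk_add_rk_le_of_subset_rankSpan (hu : ↑u ⊆ rankSpan rk (s ∪ t))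
    (hvs : ↑v ⊆ rankSpan rk s) (hvt : ↑v ⊆ rankSpan rk t) : rk u + rk v ≤ rk s + rk t := by
  have hsub := h.submodular (s ∪ v) (t ∪ v)
  have hunion := h.mono (s ∪ t) (s ∪ v ∪ (t ∪ v)) (by grind)
  have hinter := h.mono v ((s ∪ v) ∩ (t ∪ v)) (by grind)
  have := h.rk_le_of_subset_rankSpan hu
  have := h.rk_union_le_of_subset_rankSpan hvs
  have := h.rk_union_le_of_subset_rankSpan hvt
  omega

theorem mem_rankSpan_of_mem_rankSpan_pair (hq : q ∈ rankSpan rk s) (hr : r ∈ rankSpan rk s)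
    (hp : p ∈ rankSpan rk {q, r}) : p ∈ rankSpan rk s :=
  h.rankSpan_subset_rankSpan (by simp [Set.insert_subset_iff, hq, hr]) hp

theorem rk_pair_of_notMem_of_mem (hp : p ∉ rankSpan rk s) (hq : q ∈ rankSpan rk s) :
    rk {p, q} = 2 :=
  h.rk_pair_of_notMem_rankSpan fun hpq =>
    hp (h.rankSpan_subset_rankSpan (by simpa using hq) hpq)

theorem mem_rankSpan_singleton_of_mem_pair (hp : p ∉ rankSpan rk s) (hq : q ∈ rankSpan rk s)
    (hr : r ∈ rankSpan rk s) (hrpq : r ∈ rankSpan rk {p, q}) : r ∈ rankSpan rk {q} :=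
  by_contra fun hrq =>
    hp (h.mem_rankSpan_of_mem_rankSpan_pair hr hq (h.mem_rankSpan_insert_exchange hrpq hrq))

theorem mem_rankSpan_singleton_comm : p ∈ rankSpan rk {q} ↔ q ∈ rankSpan rk {p} := by
  change rk {p, q} ≤ rk {q} ↔ rk {q, p} ≤ rk {p}
  rw [Finset.pair_comm, h.singleton, h.singleton]

theorem mem_rankSpan_pair_of_rk_le_two (hqr : rk {q, r} = 2) (hs : rk s ≤ 2)
    (hq : q ∈ s) (hr : r ∈ s) (hp : p ∈ s) : p ∈ rankSpan rk {q, r} :=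
  h.mem_rankSpan_of_rk_le hp (by simp [Finset.insert_subset_iff, hq, hr]) (hs.trans hqr.ge)

theorem mem_rankSpan_pair_of_mem_planes (hs : rk s ≤ 3) (ht : rk t ≤ 3) (hst : 4 ≤ rk (s ∪ t))
    (hpq : rk {p, q} = 2) (hps : p ∈ rankSpan rk s) (hpt : p ∈ rankSpan rk t)
    (hqs : q ∈ rankSpan rk s) (hqt : q ∈ rankSpan rk t)
    (hrs : r ∈ rankSpan rk s) (hrt : r ∈ rankSpan rk t) : r ∈ rankSpan rk {p, q} := by
  have := h.rk_add_rk_le_of_subset_rankSpan (u := s ∪ t) (v := {r, p, q})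
    (fun _ hx => h.mem_rankSpan_of_mem hx)
    (by simp [Set.insert_subset_iff, hps, hqs, hrs])
    (by simp [Set.insert_subset_iff, hpt, hqt, hrt])
  change rk {r, p, q} ≤ rk {p, q}
  omega

theorem meetRk_of_mem_rankSpan {l m : Pt × Pt} (hl : p ∈ rankSpan rk {l.1, l.2})
    (hm : p ∈ rankSpan rk {m.1, m.2}) : MeetRk rk l m := by
  have := h.rk_add_rk_le_of_subset_rankSpan (u := {l.1, l.2, m.1, m.2}) (v := {p})
    (fun x hx => h.mem_rankSpan_of_mem (s := {l.1, l.2} ∪ {m.1, m.2}) (by grind))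
    (by simpa using hl) (by simpa using hm)
  have := (h.le_card {l.1, l.2}).trans Finset.card_le_two
  have := (h.le_card {m.1, m.2}).trans Finset.card_le_two
  have := h.singleton p
  change rk {l.1, l.2, m.1, m.2} ≤ 3
  omega

theorem meetRk_of_fst_mem_rankSpan {l m : Pt × Pt} (hm : m.1 ∈ rankSpan rk {l.1, l.2, m.2}) :
    MeetRk rk l m :=
  (h.rk_le_of_subset_rankSpan (s := {l.1, l.2, m.2})
    (by simp [Set.insert_subset_iff, hm, h.mem_rankSpan_of_mem])).trans
    ((h.le_card _).trans Finset.card_le_three)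

theorem skewRk_of_four_le {l m : Pt × Pt} (hlm : 4 ≤ rk {l.1, l.2, m.1, m.2}) : SkewRk rk l m :=
  le_antisymm ((h.le_card _).trans Finset.card_le_four) hlm

end IsRankFunction

theorem MeetRk.symm {l m : Pt × Pt} (hlm : MeetRk rk l m) : MeetRk rk m l := by
  have hset : ({m.1, m.2, l.1, l.2} : Finset Pt) = {l.1, l.2, m.1, m.2} := by grind
  rwa [MeetRk, hset]

theorem SkewRk.not_meetRk {l m : Pt × Pt} (hlm : SkewRk rk l m) : ¬ MeetRk rk l m :=
  fun hmeet => absurd (hlm.ge.trans hmeet) (by decide)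

/-- The rank function of a three-dimensional projective space: every line carries a third point,
the rank `4` is attained, and every plane has a point in common with every line. The last axiom
also makes coplanar lines meet and bounds the rank by `4`. -/
structure IsProjectiveRank (rk : Finset Pt → ℕ) : Prop extends IsRankFunction rk where
  exists_third_point : ∀ p q, ∃ r, rk {p, q, r} = 2 ∧ rk {q, r} = 2 ∧ rk {p, r} = 2
  exists_rk_eq_four : ∃ p q r s, rk {p, q, r, s} = 4
  exists_mem_plane_line : ∀ p q r u v, rk {p, q, r} = 3 → rk {u, v} = 2 →
    ∃ m, rk {p, q, r, m} = 3 ∧ rk {u, v, m} = 2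

namespace IsProjectiveRank

variable {s : Finset Pt} (h : IsProjectiveRank rk)
include h

theorem exists_notMem_rankSpan (hs : rk s ≤ 3) : ∃ p, p ∉ rankSpan rk s := by
  by_contra! hspan
  obtain ⟨p, q, r, t, hrk⟩ := h.exists_rk_eq_four
  have := h.rk_le_of_subset_rankSpan (t := {p, q, r, t}) fun x _ => hspan x
  omega

theorem exists_mem_rankSpan_plane_line {p q r u v : Pt} (hplane : rk {p, q, r} = 3)
    (hline : rk {u, v} = 2) : ∃ m, m ∈ rankSpan rk {p, q, r} ∧ m ∈ rankSpan rk {u, v} := by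
  obtain ⟨m, hm, hm'⟩ := h.exists_mem_plane_line p q r u v hplane hline
  exact ⟨m, h.mem_rankSpan_of_rk_le (t := {p, q, r, m}) (by simp) (by grind) (by omega),
    h.mem_rankSpan_of_rk_le (t := {u, v, m}) (by simp) (by grind) (by omega)⟩

theorem exists_mem_rankSpan_of_meetRk {l m : Pt × Pt} (hl : IsLineRk rk l) (hm : IsLineRk rk m)
    (hlm : MeetRk rk l m) : ∃ p, p ∈ rankSpan rk {l.1, l.2} ∧ p ∈ rankSpan rk {m.1, m.2} := by
  obtain ⟨o, ho⟩ := h.exists_notMem_rankSpan hlm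
  have hl_sub : rankSpan rk {l.1, l.2} ⊆ rankSpan rk {l.1, l.2, m.1, m.2} :=
    h.rankSpan_mono (by grind)
  have hm_sub : rankSpan rk {m.1, m.2} ⊆ rankSpan rk {l.1, l.2, m.1, m.2} :=
    h.rankSpan_mono (by grind)
  have hplane : rk {o, l.1, l.2} = 3 := by
    rw [h.rk_insert_of_notMem_rankSpan fun hol => ho (hl_sub hol), hl]
  obtain ⟨p, hp, hpm⟩ := h.exists_mem_rankSpan_plane_line hplane hm
  refine ⟨p, by_contra fun hpl => ho ?_, hpm⟩
  refine h.rankSpan_subset_rankSpan ?_ (h.mem_rankSpan_insert_exchange hp hpl)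
  simp [Set.insert_subset_iff, h.mem_rankSpan_of_mem, hm_sub hpm]

end IsProjectiveRank

/-- Two triads of points on distinct coplanar lines, each line avoiding the points of the triad on
the other: the nondegenerate position of the six points in Pappus's theorem. -/
structure IsTriadPair (rk : Finset Pt → ℕ) (a b : Fin 3 → Pt) : Prop where
  rk_left : rk (univ.image a) ≤ 2
  rk_right : rk (univ.image b) ≤ 2
  rk_pair_left : ∀ i j, i ≠ j → rk {a i, a j} = 2
  rk_pair_right : ∀ i j, i ≠ j → rk {b i, b j} = 2
  rk_union : rk (univ.image a ∪ univ.image b) ≤ 3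
  notMem_left : ∀ i, a i ∉ rankSpan rk (univ.image b)
  notMem_right : ∀ i, b i ∉ rankSpan rk (univ.image a)

namespace IsTriadPair

variable {a b : Fin 3 → Pt} {i j k : Fin 3} {s : Finset Pt} {p : Pt}

theorem symm (T : IsTriadPair rk a b) : IsTriadPair rk b a where
  rk_left := T.rk_right
  rk_right := T.rk_left
  rk_pair_left := T.rk_pair_right
  rk_pair_right := T.rk_pair_left
  rk_union := Finset.union_comm (univ.image a) _ ▸ T.rk_union
  notMem_left := T.notMem_right
  notMem_right := T.notMem_left

variable (T : IsTriadPair rk a b) (h : IsRankFunction rk)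
include T h

theorem mem_rankSpan_pair_left (hij : i ≠ j) (k : Fin 3) : a k ∈ rankSpan rk {a i, a j} :=
  h.mem_rankSpan_pair_of_rk_le_two (T.rk_pair_left i j hij) T.rk_left
    (by simp) (by simp) (by simp)

theorem rk_triple_left (hij : i ≠ j) (k : Fin 3) : rk {b k, a i, a j} = 3 := by
  have hk : b k ∉ rankSpan rk {a i, a j} := fun hk =>
    T.notMem_right k (h.rankSpan_mono (by simp [Finset.insert_subset_iff]) hk)
  rw [h.rk_insert_of_notMem_rankSpan hk, T.rk_pair_left i j hij]

theorem left_notMem_rankSpan_singleton (i j : Fin 3) : a i ∉ rankSpan rk {b j} := fun hij =>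
  T.notMem_left i (h.rankSpan_mono (by simp) hij)

theorem skewRk_left (hp : p ∉ rankSpan rk (univ.image a ∪ univ.image b)) (hij : i ≠ j)
    (k : Fin 3) : SkewRk rk (p, b k) (a i, a j) := by
  have hp' : p ∉ rankSpan rk {b k, a i, a j} := fun hmem =>
    hp (h.rankSpan_mono (by simp [Finset.insert_subset_iff]) hmem)
  rw [SkewRk, h.rk_insert_of_notMem_rankSpan hp', T.rk_triple_left h hij]

theorem skewRk_right (hp : p ∉ rankSpan rk (univ.image a ∪ univ.image b)) (hij : i ≠ j)
    (k : Fin 3) : SkewRk rk (p, a k) (b i, b j) :=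
  T.symm.skewRk_left h (Finset.union_comm (univ.image a) _ ▸ hp) hij k

theorem rk_plane_of_notMem (hp : p ∉ rankSpan rk (univ.image a ∪ univ.image b)) (i j : Fin 3) :
    rk {p, a i, b j} = 3 := by
  have hp' : p ∉ rankSpan rk {a i, b j} := fun hmem =>
    hp (h.rankSpan_mono (by simp [Finset.insert_subset_iff]) hmem)
  rw [h.rk_insert_of_notMem_rankSpan hp',
    h.rk_pair_of_notMem_rankSpan (T.left_notMem_rankSpan_singleton h i j)]

theorem left_notMem_plane (hp : p ∉ rankSpan rk (univ.image a ∪ univ.image b)) (hij : i ≠ j)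
    (k : Fin 3) : a j ∉ rankSpan rk {p, a i, b k} := fun hj => by
  have hskew : rk {p, b k, a i, a j} = 4 := T.skewRk_left h hp hij k
  have := h.rk_le_of_subset_rankSpan (s := {p, a i, b k}) (t := {p, b k, a i, a j})
    (by simp [Set.insert_subset_iff, h.mem_rankSpan_of_mem, hj])
  have := T.rk_plane_of_notMem h hp i k
  omega

theorem right_notMem_plane (hp : p ∉ rankSpan rk (univ.image a ∪ univ.image b)) (hjk : j ≠ k)
    (i : Fin 3) : b j ∉ rankSpan rk {p, a i, b k} := fun hj =>
  T.symm.left_notMem_plane h (Finset.union_comm (univ.image a) _ ▸ hp) hjk.symm i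
    (by rwa [Finset.pair_comm])

theorem mem_rankSpan_pair_of_cross {q x : Pt}
    (hp : p ∉ rankSpan rk (univ.image a ∪ univ.image b)) (hij : i ≠ j) (hpq : rk {p, q} = 2)
    (hq : q ∈ rankSpan rk {p, a i, b j}) (hq' : q ∈ rankSpan rk {p, a j, b i})
    (hx : x ∈ rankSpan rk {a i, b j}) (hx' : x ∈ rankSpan rk {a j, b i}) :
    x ∈ rankSpan rk {p, q} := by
  have hunion : 4 ≤ rk ({p, a i, b j} ∪ {p, a j, b i}) :=
    (T.skewRk_left h hp hij i).ge.trans (h.mono _ _ (by grind))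
  exact h.mem_rankSpan_pair_of_mem_planes (T.rk_plane_of_notMem h hp i j).le
    (T.rk_plane_of_notMem h hp j i).le hunion hpq
    (h.mem_rankSpan_of_mem (by simp)) (h.mem_rankSpan_of_mem (by simp)) hq hq'
    (h.rankSpan_mono (by grind) hx) (h.rankSpan_mono (by grind) hx')

end IsTriadPair

/-- A point `S` off the plane of the triads, a third point `U` on the line `b₀S`, and the point
`W` common to the line `a₁U` and the plane `a₀b₁S`. The lines `a₀S`, `a₁U`, `b₀b₁` and the lines
`b₀S`, `b₁W`, `a₀a₁` are the two families of skew lines fed into the Dandelin–Gallucci property. -/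
structure IsGallucciFrame (rk : Finset Pt → ℕ) (a b : Fin 3 → Pt) (S U W : Pt) : Prop
    extends IsTriadPair rk a b where
  S_notMem : S ∉ rankSpan rk (univ.image a ∪ univ.image b)
  U_mem : U ∈ rankSpan rk {S, b 0}
  S_mem : S ∈ rankSpan rk {U, b 0}
  b_zero_mem : b 0 ∈ rankSpan rk {S, U}
  W_mem_plane : W ∈ rankSpan rk {S, a 0, b 1}
  W_mem_line : W ∈ rankSpan rk {U, a 1}

theorem IsTriadPair.exists_isGallucciFrame {a b : Fin 3 → Pt} (T : IsTriadPair rk a b)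
    (h : IsProjectiveRank rk) : ∃ S U W, IsGallucciFrame rk a b S U W := by
  obtain ⟨S, hS⟩ := h.exists_notMem_rankSpan T.rk_union
  obtain ⟨U, hSbU, hbU, hSU⟩ := h.exists_third_point S (b 0)
  have hSb : rk {S, b 0} = 2 :=
    h.rk_pair_of_notMem_of_mem hS (h.mem_rankSpan_of_mem (by simp))
  have hS_mem : S ∈ rankSpan rk {U, b 0} :=
    h.mem_rankSpan_pair_of_rk_le_two (by rwa [Finset.pair_comm]) hSbU.le
      (by simp) (by simp) (by simp)
  have hU : U ∉ rankSpan rk (univ.image a ∪ univ.image b) := fun hU =>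
    hS (h.mem_rankSpan_of_mem_rankSpan_pair hU (h.mem_rankSpan_of_mem (by simp)) hS_mem)
  have ha_U : rk {U, a 1} = 2 :=
    h.rk_pair_of_notMem_of_mem hU (h.mem_rankSpan_of_mem (by simp))
  obtain ⟨W, hW_plane, hW_line⟩ :=
    h.exists_mem_rankSpan_plane_line (T.rk_plane_of_notMem h.1 hS 0 1) ha_U
  exact ⟨S, U, W,
    { toIsTriadPair := T
      S_notMem := hS
      U_mem := h.mem_rankSpan_pair_of_rk_le_two hSb hSbU.le (by simp) (by simp) (by simp)
      S_mem := hS_mem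
      b_zero_mem := h.mem_rankSpan_pair_of_rk_le_two hSU hSbU.le (by simp) (by simp) (by simp)
      W_mem_plane := hW_plane
      W_mem_line := hW_line }⟩

namespace IsGallucciFrame

variable {a b : Fin 3 → Pt} {S U W : Pt} (F : IsGallucciFrame rk a b S U W)
include F

section RankFunction

variable (h : IsRankFunction rk)
include h

theorem U_notMem : U ∉ rankSpan rk (univ.image a ∪ univ.image b) := fun hU =>
  F.S_notMem (h.mem_rankSpan_of_mem_rankSpan_pair hU (h.mem_rankSpan_of_mem (by simp)) F.S_mem)

theorem U_notMem_plane : U ∉ rankSpan rk {S, a 0, b 1} := fun hU =>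
  F.right_notMem_plane h F.S_notMem zero_ne_one 0
    (h.mem_rankSpan_of_mem_rankSpan_pair (h.mem_rankSpan_of_mem (by simp)) hU F.b_zero_mem)

theorem a_one_mem : a 1 ∈ rankSpan rk {U, W} := by
  have hW : W ∉ rankSpan rk {U} := fun hW =>
    F.U_notMem_plane h <| h.rankSpan_subset_rankSpan (by simpa using F.W_mem_plane)
      (h.mem_rankSpan_singleton_comm.1 hW)
  rw [Finset.pair_comm]
  exact h.mem_rankSpan_insert_exchange (Finset.pair_comm U (a 1) ▸ F.W_mem_line) hW

theorem U_mem_rankSpan_W : U ∈ rankSpan rk {W, a 1} := by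
  have hW : W ∉ rankSpan rk {a 1} := fun hW =>
    F.left_notMem_plane h F.S_notMem zero_ne_one 1 <|
      h.rankSpan_subset_rankSpan (by simpa using F.W_mem_plane)
        (h.mem_rankSpan_singleton_comm.1 hW)
  exact h.mem_rankSpan_insert_exchange F.W_mem_line hW

theorem W_notMem : W ∉ rankSpan rk (univ.image a ∪ univ.image b) := fun hW =>
  F.U_notMem h <| h.mem_rankSpan_of_mem_rankSpan_pair hW (h.mem_rankSpan_of_mem (by simp))
    (F.U_mem_rankSpan_W h)

theorem skewRk_left_lines : SkewRk rk (S, a 0) (U, a 1) := by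
  have hb : b 0 ∈ rankSpan rk {S, a 0, U, a 1} := h.rankSpan_mono (by grind) F.b_zero_mem
  refine h.skewRk_of_four_le ((F.skewRk_left h F.S_notMem zero_ne_one 0).ge.trans ?_)
  exact h.rk_le_of_subset_rankSpan (by simp [Set.insert_subset_iff, h.mem_rankSpan_of_mem, hb])

theorem skewRk_right_lines : SkewRk rk (S, b 0) (W, b 1) := by
  have hU : U ∈ rankSpan rk {S, b 0, W, b 1} := h.rankSpan_mono (by grind) F.U_mem
  have ha : a 1 ∈ rankSpan rk {S, b 0, W, b 1} :=
    h.mem_rankSpan_of_mem_rankSpan_pair hU (h.mem_rankSpan_of_mem (by simp)) (F.a_one_mem h)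
  refine h.skewRk_of_four_le ((F.skewRk_right h F.S_notMem zero_ne_one 1).ge.trans ?_)
  exact h.rk_le_of_subset_rankSpan (by simp [Set.insert_subset_iff, h.mem_rankSpan_of_mem, ha])

theorem meetRk_of_meetRk (hDG : DGRank rk) {d e : Pt × Pt} (hd : IsLineRk rk d)
    (he : IsLineRk rk e)
    (hd₁ : MeetRk rk d (S, b 0)) (hd₂ : MeetRk rk d (W, b 1)) (hd₃ : MeetRk rk d (a 0, a 1))
    (he₁ : MeetRk rk e (S, a 0)) (he₂ : MeetRk rk e (U, a 1)) (he₃ : MeetRk rk e (b 0, b 1)) :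
    MeetRk rk d e := by
  have hline {p q : Pt} (hp : p ∉ rankSpan rk (univ.image a ∪ univ.image b))
      (hq : q ∈ univ.image a ∪ univ.image b) : IsLineRk rk (p, q) :=
    h.rk_pair_of_notMem_of_mem hp (h.mem_rankSpan_of_mem hq)
  have hshare {l m : Pt × Pt} (p : Pt) (hl : p ∈ ({l.1, l.2} : Finset Pt))
      (hm : p ∈ ({m.1, m.2} : Finset Pt)) : MeetRk rk l m :=
    h.meetRk_of_mem_rankSpan (h.mem_rankSpan_of_mem hl) (h.mem_rankSpan_of_mem hm)
  have hcoplanar : MeetRk rk (b 0, b 1) (a 0, a 1) :=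
    (h.mono _ _ (by simp [Finset.insert_subset_iff])).trans F.rk_union
  exact hDG (S, a 0) (U, a 1) (b 0, b 1) (S, b 0) (W, b 1) (a 0, a 1) d e
    (hline F.S_notMem (by simp)) (hline (F.U_notMem h) (by simp))
    (F.rk_pair_right 0 1 zero_ne_one)
    (hline F.S_notMem (by simp)) (hline (F.W_notMem h) (by simp))
    (F.rk_pair_left 0 1 zero_ne_one) hd he
    (F.skewRk_left_lines h) (F.skewRk_right h F.S_notMem zero_ne_one 0)
    (F.skewRk_right h (F.U_notMem h) zero_ne_one 1)
    (F.skewRk_right_lines h) (F.skewRk_left h F.S_notMem zero_ne_one 0)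
    (F.skewRk_left h (F.W_notMem h) zero_ne_one 1)
    (hshare S (by simp) (by simp)) (h.meetRk_of_fst_mem_rankSpan F.W_mem_plane)
    (hshare (a 0) (by simp) (by simp))
    (h.meetRk_of_mem_rankSpan (h.mem_rankSpan_of_mem (by simp)) F.U_mem)
    (h.meetRk_of_mem_rankSpan F.W_mem_line (h.mem_rankSpan_of_mem (by simp)))
    (hshare (a 1) (by simp) (by simp))
    (hshare (b 0) (by simp) (by simp)) (hshare (b 1) (by simp) (by simp)) hcoplanar
    hd₁ hd₂ hd₃ he₁ he₂ he₃

theorem S_notMem_plane : S ∉ rankSpan rk {U, a 1, b 2} := fun hS =>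
  F.right_notMem_plane (j := 0) h (F.U_notMem h) (by decide : (0 : Fin 3) ≠ 2) 1
    (h.mem_rankSpan_of_mem_rankSpan_pair hS (h.mem_rankSpan_of_mem (by simp)) F.b_zero_mem)

theorem W_notMem_plane : W ∉ rankSpan rk {S, a 0, b 2} := fun hW => by
  have hunion : 4 ≤ rk ({S, a 0, b 1} ∪ {S, a 0, b 2}) :=
    (F.skewRk_right h F.S_notMem (by decide : (1 : Fin 3) ≠ 2) 0).ge.trans (h.mono _ _ (by grind))
  have hW_Sa : W ∈ rankSpan rk {S, a 0} :=
    h.mem_rankSpan_pair_of_mem_planes (F.rk_plane_of_notMem h F.S_notMem 0 1).le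
      (F.rk_plane_of_notMem h F.S_notMem 0 2).le hunion
      (h.rk_pair_of_notMem_of_mem F.S_notMem (h.mem_rankSpan_of_mem (by simp)))
      (h.mem_rankSpan_of_mem (by simp)) (h.mem_rankSpan_of_mem (by simp))
      (h.mem_rankSpan_of_mem (by simp)) (h.mem_rankSpan_of_mem (by simp)) F.W_mem_plane hW
  exact (F.skewRk_left_lines h).not_meetRk (h.meetRk_of_mem_rankSpan hW_Sa F.W_mem_line)

end RankFunction

theorem exists_mem_plane_line_left (h : IsProjectiveRank rk) :
    ∃ P, IsLineRk rk (P, a 2) ∧ P ∈ rankSpan rk {S, a 2, b 0} ∧ P ∈ rankSpan rk {W, b 1} := by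
  have ha₂ : a 2 ∉ rankSpan rk {W, b 1} := fun ha =>
    F.left_notMem_rankSpan_singleton h.1 2 1 <| h.mem_rankSpan_singleton_of_mem_pair
      (F.W_notMem h.1) (h.mem_rankSpan_of_mem (by simp)) (h.mem_rankSpan_of_mem (by simp)) ha
  have hWb : rk {W, b 1} = 2 :=
    h.rk_pair_of_notMem_of_mem (F.W_notMem h.1) (h.mem_rankSpan_of_mem (by simp))
  obtain ⟨P, hP_plane, hP_line⟩ := h.exists_mem_rankSpan_plane_line
    (F.rk_plane_of_notMem h.1 F.S_notMem 2 0) hWb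
  exact ⟨P, (Finset.pair_comm P _ ▸ h.rk_pair_of_notMem_of_mem ha₂ hP_line : rk {P, a 2} = 2),
    hP_plane, hP_line⟩

theorem exists_mem_plane_line_right (h : IsProjectiveRank rk) :
    ∃ Q, IsLineRk rk (Q, b 2) ∧ Q ∈ rankSpan rk {S, a 0, b 2} ∧ Q ∈ rankSpan rk {U, a 1} := by
  have hb₂ : b 2 ∉ rankSpan rk {U, a 1} := fun hb =>
    F.symm.left_notMem_rankSpan_singleton h.1 2 1 <| h.mem_rankSpan_singleton_of_mem_pair
      (F.U_notMem h.1) (h.mem_rankSpan_of_mem (by simp)) (h.mem_rankSpan_of_mem (by simp)) hb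
  have hUa : rk {U, a 1} = 2 :=
    h.rk_pair_of_notMem_of_mem (F.U_notMem h.1) (h.mem_rankSpan_of_mem (by simp))
  obtain ⟨Q, hQ_plane, hQ_line⟩ := h.exists_mem_rankSpan_plane_line
    (F.rk_plane_of_notMem h.1 F.S_notMem 0 2) hUa
  exact ⟨Q, (Finset.pair_comm Q _ ▸ h.rk_pair_of_notMem_of_mem hb₂ hQ_line : rk {Q, b 2} = 2),
    hQ_plane, hQ_line⟩

theorem exists_mem_planes (h : IsProjectiveRank rk) (hDG : DGRank rk) :
    ∃ N, N ∈ rankSpan rk {S, a 0, b 2} ∧ N ∈ rankSpan rk {S, a 2, b 0} ∧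
      N ∈ rankSpan rk {W, a 1, b 2} ∧ N ∈ rankSpan rk {W, a 2, b 1} := by
  have self_mem {p : Pt} {s : Finset Pt} (hp : p ∈ s) : p ∈ rankSpan rk s :=
    h.mem_rankSpan_of_mem hp
  obtain ⟨P, hP, hP_plane, hP_line⟩ := F.exists_mem_plane_line_left h
  obtain ⟨Q, hQ, hQ_plane, hQ_line⟩ := F.exists_mem_plane_line_right h
  have ha₂ : a 2 ∈ rankSpan rk {a 0, a 1} := F.mem_rankSpan_pair_left h.1 zero_ne_one 2
  have hb₂ : b 2 ∈ rankSpan rk {b 0, b 1} := F.symm.mem_rankSpan_pair_left h.1 zero_ne_one 2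
  have hmeet : MeetRk rk (P, a 2) (Q, b 2) := F.meetRk_of_meetRk h.1 hDG hP hQ
    (MeetRk.symm (h.meetRk_of_fst_mem_rankSpan (h.rankSpan_mono (by grind) hP_plane)))
    (h.meetRk_of_mem_rankSpan (self_mem (by simp)) hP_line)
    (h.meetRk_of_mem_rankSpan (self_mem (by simp)) ha₂)
    (MeetRk.symm (h.meetRk_of_fst_mem_rankSpan hQ_plane))
    (h.meetRk_of_mem_rankSpan (self_mem (by simp)) hQ_line)
    (h.meetRk_of_mem_rankSpan (self_mem (by simp)) hb₂)
  obtain ⟨N, hNP, hNQ⟩ := h.exists_mem_rankSpan_of_meetRk hP hQ hmeet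
  have hP_W : P ∈ rankSpan rk {W, a 2, b 1} := h.rankSpan_mono (by grind) hP_line
  have hU_W : U ∈ rankSpan rk {W, a 1, b 2} :=
    h.rankSpan_mono (by grind) (F.U_mem_rankSpan_W h.1)
  have hQ_W : Q ∈ rankSpan rk {W, a 1, b 2} :=
    h.mem_rankSpan_of_mem_rankSpan_pair hU_W (self_mem (by simp)) hQ_line
  exact ⟨N, h.mem_rankSpan_of_mem_rankSpan_pair hQ_plane (self_mem (by simp)) hNQ,
    h.mem_rankSpan_of_mem_rankSpan_pair hP_plane (self_mem (by simp)) hNP,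
    h.mem_rankSpan_of_mem_rankSpan_pair hQ_W (self_mem (by simp)) hNQ,
    h.mem_rankSpan_of_mem_rankSpan_pair hP_W (self_mem (by simp)) hNP⟩

end IsGallucciFrame

namespace IsTriadPair

variable {a b x : Fin 3 → Pt} (T : IsTriadPair rk a b) (h : IsProjectiveRank rk)
  (hDG : DGRank rk) (hx : ∀ i j k, i ≠ j → j ≠ k → i ≠ k → x k ∈ rankSpan rk {a i, b j})
include T h hDG hx

theorem exists_mem_rankSpan_pairs_of_cross :
    ∃ S W N, S ∉ rankSpan rk (univ.image a ∪ univ.image b) ∧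
      x 2 ∈ rankSpan rk {S, W} ∧ x 1 ∈ rankSpan rk {S, N} ∧ x 0 ∈ rankSpan rk {W, N} := by
  obtain ⟨S, U, W, F⟩ := T.exists_isGallucciFrame h
  obtain ⟨N, hN₀₂, hN₂₀, hN₁₂, hN₂₁⟩ := F.exists_mem_planes h hDG
  have hW₁₀ : W ∈ rankSpan rk {S, a 1, b 0} :=
    h.mem_rankSpan_of_mem_rankSpan_pair (h.rankSpan_mono (by grind) F.U_mem)
      (h.mem_rankSpan_of_mem (by simp)) F.W_mem_line
  have hW_U : W ∈ rankSpan rk {U, a 1, b 2} := h.rankSpan_mono (by grind) F.W_mem_line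
  have hN_U : N ∈ rankSpan rk {U, a 1, b 2} :=
    h.rankSpan_subset_rankSpan
      (by simp [Set.insert_subset_iff, hW_U, h.mem_rankSpan_of_mem]) hN₁₂
  have hSW : rk {S, W} = 2 := h.rk_pair_of_notMem_of_mem (F.S_notMem_plane h.1) hW_U
  have hSN : rk {S, N} = 2 := h.rk_pair_of_notMem_of_mem (F.S_notMem_plane h.1) hN_U
  have hWN : rk {W, N} = 2 := h.rk_pair_of_notMem_of_mem (F.W_notMem_plane h.1) hN₀₂
  refine ⟨S, W, N, F.S_notMem, ?_, ?_, ?_⟩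
  · exact T.mem_rankSpan_pair_of_cross h.1 F.S_notMem zero_ne_one hSW F.W_mem_plane hW₁₀
      (hx 0 1 2 (by decide) (by decide) (by decide)) (hx 1 0 2 (by decide) (by decide) (by decide))
  · exact T.mem_rankSpan_pair_of_cross h.1 F.S_notMem (by decide) hSN hN₀₂ hN₂₀
      (hx 0 2 1 (by decide) (by decide) (by decide)) (hx 2 0 1 (by decide) (by decide) (by decide))
  · exact T.mem_rankSpan_pair_of_cross h.1 (F.W_notMem h.1) (by decide) hWN hN₁₂ hN₂₁
      (hx 1 2 0 (by decide) (by decide) (by decide)) (hx 2 1 0 (by decide) (by decide) (by decide))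

theorem rk_image_le_two_of_cross : rk (univ.image x) ≤ 2 := by
  obtain ⟨S, W, N, hS, hx₂, hx₁, hx₀⟩ := T.exists_mem_rankSpan_pairs_of_cross h hDG hx
  have hx_SWN : ∀ k, x k ∈ rankSpan rk {S, W, N} := by
    simp only [Fin.forall_fin_succ, IsEmpty.forall_iff, and_true]
    exact ⟨h.rankSpan_mono (by grind) hx₀, h.rankSpan_mono (by grind) hx₁,
      h.rankSpan_mono (by grind) hx₂⟩
  have hx_plane : ∀ k, x k ∈ rankSpan rk (univ.image a ∪ univ.image b) := fun k => by
    obtain ⟨i, j, hij, hjk, hik⟩ :=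
      (by decide : ∀ k : Fin 3, ∃ i j, i ≠ j ∧ j ≠ k ∧ i ≠ k) k
    exact h.rankSpan_mono (by simp [Finset.insert_subset_iff]) (hx i j k hij hjk hik)
  have hSWN : rk {S, W, N} ≤ 3 := (h.le_card _).trans Finset.card_le_three
  have hsub := h.rk_add_rk_le_of_subset_rankSpan (s := {S, W, N})
    (t := univ.image a ∪ univ.image b) (u := insert S (univ.image a ∪ univ.image b))
    (v := univ.image x)
    (fun p hp => h.mem_rankSpan_of_mem (by grind))
    (by simpa [Set.range_subset_iff] using hx_SWN)
    (by simpa [Set.range_subset_iff] using hx_plane)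
  rw [h.rk_insert_of_notMem_rankSpan hS] at hsub
  omega

end IsTriadPair

/-- The configuration of Pappus's theorem: `x k` lies on each of the two cross lines joining the
points of `a` and `b` with distinct indices other than `k`. -/
structure IsPappusConfig (rk : Finset Pt → ℕ) (a b x : Fin 3 → Pt) : Prop where
  rk_left : rk (univ.image a) ≤ 2
  rk_right : rk (univ.image b) ≤ 2
  rk_pair_left : ∀ i j, i ≠ j → rk {a i, a j} = 2
  rk_pair_right : ∀ i j, i ≠ j → rk {b i, b j} = 2
  three_le_rk : 3 ≤ rk (univ.image a ∪ univ.image b)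
  mem_cross : ∀ i j k, i ≠ j → j ≠ k → i ≠ k → x k ∈ rankSpan rk {a i, b j}

namespace IsPappusConfig

variable {a b x : Fin 3 → Pt} {i j : Fin 3} (C : IsPappusConfig rk a b x)
include C

theorem symm : IsPappusConfig rk b a x where
  rk_left := C.rk_right
  rk_right := C.rk_left
  rk_pair_left := C.rk_pair_right
  rk_pair_right := C.rk_pair_left
  three_le_rk := Finset.union_comm (univ.image a) _ ▸ C.three_le_rk
  mem_cross i j k hij hjk hik := Finset.pair_comm (a j) _ ▸ C.mem_cross j i k hij.symm hik hjk

theorem left_notMem_of_mem (h : IsRankFunction rk) (hi : a i ∈ rankSpan rk (univ.image b))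
    (hij : i ≠ j) : a j ∉ rankSpan rk (univ.image b) := fun hj => by
  have ha : ∀ k, a k ∈ rankSpan rk (univ.image b) := fun k =>
    h.mem_rankSpan_of_mem_rankSpan_pair hi hj <|
      h.mem_rankSpan_pair_of_rk_le_two (C.rk_pair_left i j hij) C.rk_left
        (by simp) (by simp) (by simp)
  have hb : ∀ k, b k ∈ rankSpan rk (univ.image b) := fun k => h.mem_rankSpan_of_mem (by simp)
  have := h.rk_le_of_subset_rankSpan (s := univ.image b) (t := univ.image a ∪ univ.image b)
    (by simpa [Set.range_subset_iff] using ⟨ha, hb⟩)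
  have := C.three_le_rk
  have := C.rk_right
  omega

/-- If `a i` is the common point of the two lines, then the intersection points other than `x i`
coincide with `b i`. -/
theorem rk_image_le_two_of_mem (h : IsRankFunction rk)
    (hi : a i ∈ rankSpan rk (univ.image b)) : rk (univ.image x) ≤ 2 := by
  have hb : ∀ k, b k ∈ rankSpan rk (univ.image b) := fun k => h.mem_rankSpan_of_mem (by simp)
  have hx : ∀ k, x k ∈ rankSpan rk {b i, x i} := fun k => by
    obtain rfl | hki := eq_or_ne k i
    · exact h.mem_rankSpan_of_mem (by simp)
    obtain ⟨j, hij, hjk⟩ := (by decide : ∀ i k : Fin 3, ∃ j, i ≠ j ∧ j ≠ k) i k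
    have hxk : x k ∈ rankSpan rk (univ.image b) :=
      h.mem_rankSpan_of_mem_rankSpan_pair hi (hb j) (C.mem_cross i j k hij hjk hki.symm)
    refine h.rankSpan_mono (by simp) <| h.mem_rankSpan_singleton_of_mem_pair
      (C.left_notMem_of_mem h hi hij) (hb i) hxk (C.mem_cross j i k hij.symm hki.symm hjk)
  have hcard : rk {b i, x i} ≤ 2 := (h.le_card _).trans Finset.card_le_two
  have hspan : rk (univ.image x) ≤ rk {b i, x i} :=
    h.rk_le_of_subset_rankSpan (by simpa [Set.range_subset_iff] using hx)
  exact hspan.trans hcard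

theorem rk_union_le_three (h : IsRankFunction rk) :
    rk (univ.image a ∪ univ.image b) ≤ 3 := by
  have hmeet : MeetRk rk (a 0, b 1) (a 1, b 0) :=
    h.meetRk_of_mem_rankSpan (C.mem_cross 0 1 2 (by decide) (by decide) (by decide))
      (C.mem_cross 1 0 2 (by decide) (by decide) (by decide))
  have ha : ∀ k, a k ∈ rankSpan rk {a 0, b 1, a 1, b 0} := fun k =>
    h.rankSpan_mono (by grind) <| h.mem_rankSpan_pair_of_rk_le_two
      (C.rk_pair_left 0 1 zero_ne_one) C.rk_left (by simp) (by simp) (by simp)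
  have hb : ∀ k, b k ∈ rankSpan rk {a 0, b 1, a 1, b 0} := fun k =>
    h.rankSpan_mono (by grind) <| h.mem_rankSpan_pair_of_rk_le_two
      (C.rk_pair_right 0 1 zero_ne_one) C.rk_right (by simp) (by simp) (by simp)
  exact (h.rk_le_of_subset_rankSpan (by simpa [Set.range_subset_iff] using ⟨ha, hb⟩)).trans hmeet

theorem isTriadPair (h : IsRankFunction rk) (ha : ∀ i, a i ∉ rankSpan rk (univ.image b))
    (hb : ∀ i, b i ∉ rankSpan rk (univ.image a)) : IsTriadPair rk a b where
  rk_left := C.rk_left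
  rk_right := C.rk_right
  rk_pair_left := C.rk_pair_left
  rk_pair_right := C.rk_pair_right
  rk_union := C.rk_union_le_three h
  notMem_left := ha
  notMem_right := hb

theorem rk_image_le_two (h : IsProjectiveRank rk) (hDG : DGRank rk) :
    rk (univ.image x) ≤ 2 := by
  by_cases! ha : ∃ i, a i ∈ rankSpan rk (univ.image b)
  · obtain ⟨i, hi⟩ := ha
    exact C.rk_image_le_two_of_mem h.1 hi
  by_cases! hb : ∃ i, b i ∈ rankSpan rk (univ.image a)
  · obtain ⟨i, hi⟩ := hb
    exact C.symm.rk_image_le_two_of_mem h.1 hi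
  exact (C.isTriadPair h.1 ha hb).rk_image_le_two_of_cross h hDG C.mem_cross

end IsPappusConfig

theorem image_univ_vecCons (p q r : Pt) : univ.image ![p, q, r] = {p, q, r} := by
  ext x
  simp [Fin.exists_fin_succ, eq_comm]

theorem rk_vecCons_pair_eq_two {p q r : Pt} (hpq : rk {p, q} = 2) (hpr : rk {p, r} = 2)
    (hqr : rk {q, r} = 2) (i j : Fin 3) (hij : i ≠ j) :
    rk {![p, q, r] i, ![p, q, r] j} = 2 := by
  fin_cases i <;> fin_cases j <;> simp_all [Finset.pair_comm]

theorem stmt_17_general (h : IsProjectiveRank rk) (hDG : DGRank rk) : PappusRank rk := by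
  intro A B C A' B' C' X Y Z hABC hABC' hAB hAC hBC hAB' hAC' hBC' _ hA_B' hA_C' hB_A' _ hB_C'
    hC_A' hC_B' _ hrk hX hX' hY hY' hZ hZ'
  have hcross {p q r : Pt} (hpq : rk {p, q} = 2) (hpqr : rk {p, q, r} ≤ 2) :
      r ∈ rankSpan rk {p, q} :=
    h.mem_rankSpan_pair_of_rk_le_two hpq hpqr (by simp) (by simp) (by simp)
  have hcross' {p q r : Pt} (hpq : rk {p, q} = 2) (hqpr : rk {q, p, r} ≤ 2) :
      r ∈ rankSpan rk {p, q} :=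
    hcross hpq (Finset.insert_comm q p {r} ▸ hqpr)
  have hconfig : IsPappusConfig rk ![A, B, C] ![A', B', C'] ![Z, Y, X] :=
    { rk_left := by rwa [image_univ_vecCons]
      rk_right := by rwa [image_univ_vecCons]
      rk_pair_left := rk_vecCons_pair_eq_two hAB hAC hBC
      rk_pair_right := rk_vecCons_pair_eq_two hAB' hAC' hBC'
      three_le_rk := by
        simpa only [image_univ_vecCons, Finset.insert_union, Finset.singleton_union] using hrk
      mem_cross := by
        simp [Fin.forall_fin_succ, hcross hA_B' hX, hcross' hB_A' hX', hcross hA_C' hY,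
          hcross' hC_A' hY', hcross hB_C' hZ, hcross' hC_B' hZ'] }
  have hXYZ : ({X, Y, Z} : Finset Pt) = univ.image ![Z, Y, X] := by
    rw [image_univ_vecCons, Finset.insert_comm, Finset.pair_comm X, Finset.insert_comm]
  exact hXYZ ▸ hconfig.rk_image_le_two h hDG

end RankGeometry

/-- In a 3D projective incidence space (given by the full rank
axiom system (A1)–(A10)), Dandelin–Gallucci's property implies Pappus's
property. -/
theorem stmt_17 {Pt : Type*} [DecidableEq Pt] (rk : Finset Pt → ℕ)
    (hA1 : ∀ X : Finset Pt, rk X ≤ X.card)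
    (hA2 : ∀ X Y : Finset Pt, X ⊆ Y → rk X ≤ rk Y)
    (hA3 : ∀ X Y : Finset Pt, rk (X ∪ Y) + rk (X ∩ Y) ≤ rk X + rk Y)
    (hA4 : ∀ p : Pt, rk {p} = 1)
    (hA5 : ∀ p q : Pt, p ≠ q → rk {p, q} = 2)
    (hA6 : ∀ A B C D : Pt, rk {A, B, C, D} ≤ 3 →
      ∃ J : Pt, rk {A, B, J} = 2 ∧ rk {C, D, J} = 2)
    (hA7 : ∀ A B : Pt, ∃ C : Pt,
      rk {A, B, C} = 2 ∧ rk {B, C} = 2 ∧ rk {A, C} = 2)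
    (hA8 : ∃ P₁ P₂ P₃ P₄ : Pt, rk {P₁, P₂, P₃, P₄} = 4)
    (hA9 : ∀ X : Finset Pt, rk X ≤ 4)
    (hA10 : ∀ A B C A' B' : Pt, rk {A, B, C} = 3 → rk {A', B'} = 2 →
      ∃ M : Pt, rk {A, B, C, M} = 3 ∧ rk {A', B', M} = 2)
    (hDG : DGRank rk) :
    PappusRank rk := by
  exact stmt_17_general ⟨⟨hA1, hA2, hA3, hA4⟩, hA7, hA8, hA10⟩ hDG
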